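/- Let β = (Λ/λ)(Q−1)+1 with Q = 2n+2 and 0 < λ ≤ Λ. Then Φ₂(ξ) = C₁ρ(ξ)^{2−β}+C₂ with C₁ ≥ 0 satisfies 𝓜⁺_{λ,Λ}(D²Φ₂) = 0 classically in ℝ^{2n+1}∖{0}, and r ↦ C₁r^{2−β}+C₂ is convex and decreasing on (0,∞). -/

import Mathlib

open scoped BigOperators

noncomputable section

/-- Direction vector of the Heisenberg vector field `X_i` at the point `ξ ∈ ℝ^{2n+1}`:
for `i < n`, `X_i = ∂_i + 2 ξ_{i+n} ∂_{2n}`; for `n ≤ i < 2n`, `X_i = ∂_i - 2 ξ_{i-n} ∂_{2n}`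
(indices `0,…,2n`, the last coordinate being index `2n`). -/
def Xvec (n : ℕ) (ξ : Fin (2*n+1) → ℝ) (i : Fin (2*n)) : Fin (2*n+1) → ℝ :=
  fun j =>
    (if (j : ℕ) = (i : ℕ) then 1 else 0) +
    (if (j : ℕ) = 2*n then
        (if h : (i : ℕ) < n then 2 * ξ ⟨(i : ℕ) + n, by omega⟩
         else -2 * ξ ⟨(i : ℕ) - n, by have := i.isLt; omega⟩)
      else 0)

/-- The Heisenberg vector field `X_i` acting on a function. -/
def X (n : ℕ) (i : Fin (2*n)) (f : (Fin (2*n+1) → ℝ) → ℝ)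
    (ξ : Fin (2*n+1) → ℝ) : ℝ :=
  fderiv ℝ f ξ (Xvec n ξ i)

/-- `∑_{i=1}^{2n} ξ_i²`, the squared euclidean norm of the horizontal coordinates. -/
def hsq (n : ℕ) (ξ : Fin (2*n+1) → ℝ) : ℝ :=
  ∑ i : Fin (2*n), (ξ ⟨(i : ℕ), by have := i.isLt; omega⟩)^2

/-- The homogeneous norm `ρ(ξ) = ((∑ ξ_i²)² + ξ_{2n+1}²)^{1/4}`. -/
def rho (n : ℕ) (ξ : Fin (2*n+1) → ℝ) : ℝ :=
  ((hsq n ξ)^2 + (ξ ⟨2*n, by omega⟩)^2) ^ (1/4 : ℝ)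

/-- `|∇_{H^n}ρ(ξ)|²`. -/
def gradSq (n : ℕ) (ξ : Fin (2*n+1) → ℝ) : ℝ :=
  ∑ i : Fin (2*n), (X n i (rho n) ξ)^2

/-- The symmetrized Heisenberg Hessian `D²_{H^n} f = (X_i X_j f)_{sym}`. -/
def HessH (n : ℕ) (f : (Fin (2*n+1) → ℝ) → ℝ) (ξ : Fin (2*n+1) → ℝ) :
    Matrix (Fin (2*n)) (Fin (2*n)) ℝ :=
  Matrix.of fun i j =>
    (X n i (fun η => X n j f η) ξ + X n j (fun η => X n i f η) ξ) / 2

/-- The Pucci maximal operator `𝓟⁺_{λ,Λ}(M) = -Λ ∑_{e_i<0} e_i - λ ∑_{e_i>0} e_i`. -/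
def pucciPlus (la La : ℝ) {k : ℕ} {M : Matrix (Fin k) (Fin k) ℝ}
    (hM : M.IsHermitian) : ℝ :=
  ∑ i, (-La * min (hM.eigenvalues i) 0 - la * max (hM.eigenvalues i) 0)

/-- The Pucci minimal operator `𝓟⁻_{λ,Λ}(M) = -Λ ∑_{e_i>0} e_i - λ ∑_{e_i<0} e_i`. -/
def pucciMinus (la La : ℝ) {k : ℕ} {M : Matrix (Fin k) (Fin k) ℝ}
    (hM : M.IsHermitian) : ℝ :=
  ∑ i, (-La * max (hM.eigenvalues i) 0 - la * min (hM.eigenvalues i) 0)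

section HeisenbergCalculus

variable {n : ℕ}

/-- The horizontal coordinate `ξ_i`. -/
def hcoord (n : ℕ) (i : Fin (2*n)) (ξ : Fin (2*n+1) → ℝ) : ℝ := ξ ⟨i, by omega⟩

/-- The vertical coordinate of `ξ`. -/
def vcoord (n : ℕ) (ξ : Fin (2*n+1) → ℝ) : ℝ := ξ ⟨2*n, by omega⟩

/-- The `i`-th component of the symplectic rotation of the horizontal coordinates. -/
def hrot (n : ℕ) (i : Fin (2*n)) (ξ : Fin (2*n+1) → ℝ) : ℝ :=
  if h : (i : ℕ) < n then ξ ⟨i + n, by omega⟩ else -ξ ⟨i - n, by omega⟩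

/-- The involution exchanging the two halves of the horizontal indices. -/
def hswap (n : ℕ) : Equiv.Perm (Fin (2*n)) :=
  Function.Involutive.toPerm
    (fun i => if h : (i : ℕ) < n then ⟨i + n, by omega⟩ else ⟨i - n, by omega⟩) (by
      intro i
      ext
      dsimp only
      split_ifs <;> grind)

/-- The fourth power of the homogeneous norm. -/
def hgauge (n : ℕ) (ξ : Fin (2*n+1) → ℝ) : ℝ := hsq n ξ ^ 2 + vcoord n ξ ^ 2

theorem hsq_eq_sum (ξ : Fin (2*n+1) → ℝ) : hsq n ξ = ∑ i, hcoord n i ξ ^ 2 := rfl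

theorem hrot_eq (i : Fin (2*n)) (ξ : Fin (2*n+1) → ℝ) :
    hrot n i ξ = (if (i : ℕ) < n then 1 else -1) * hcoord n (hswap n i) ξ := by
  change _ = _ * hcoord n (if h : (i : ℕ) < n then ⟨i + n, by omega⟩ else ⟨i - n, by omega⟩) ξ
  by_cases h : (i : ℕ) < n <;> simp [hrot, hcoord, h]

theorem hswap_hswap (i : Fin (2*n)) : hswap n (hswap n i) = i :=
  Function.Involutive.toPerm_involutive _ i

theorem hswap_lt_iff (i : Fin (2*n)) : (hswap n i : ℕ) < n ↔ ¬ (i : ℕ) < n := by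
  change ((if h : (i : ℕ) < n then ⟨i + n, by omega⟩ else ⟨i - n, by omega⟩ : Fin (2*n)) : ℕ) < n
    ↔ _
  split_ifs with h <;> simp only [h] <;> grind

theorem hrot_sq (i : Fin (2*n)) (ξ : Fin (2*n+1) → ℝ) :
    hrot n i ξ ^ 2 = hcoord n (hswap n i) ξ ^ 2 := by
  rw [hrot_eq]
  split_ifs <;> ring

theorem hcoord_mul_hrot_swap (i : Fin (2*n)) (ξ : Fin (2*n+1) → ℝ) :
    hcoord n (hswap n i) ξ * hrot n (hswap n i) ξ = -(hcoord n i ξ * hrot n i ξ) := by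
  rw [hrot_eq, hrot_eq, hswap_hswap]
  simp only [hswap_lt_iff]
  split_ifs <;> ring

theorem sum_hrot_sq (ξ : Fin (2*n+1) → ℝ) : ∑ i, hrot n i ξ ^ 2 = hsq n ξ := by
  simp_rw [hrot_sq]
  exact Equiv.sum_comp (hswap n) fun i => hcoord n i ξ ^ 2

theorem sum_hcoord_mul_hrot (ξ : Fin (2*n+1) → ℝ) :
    ∑ i, hcoord n i ξ * hrot n i ξ = 0 := by
  have h := Equiv.sum_comp (hswap n) fun i => hcoord n i ξ * hrot n i ξ
  simp_rw [hcoord_mul_hrot_swap, Finset.sum_neg_distrib] at h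
  linarith

theorem hsq_nonneg (ξ : Fin (2*n+1) → ℝ) : 0 ≤ hsq n ξ :=
  Finset.sum_nonneg fun _ _ => sq_nonneg _

theorem hgauge_nonneg (ξ : Fin (2*n+1) → ℝ) : 0 ≤ hgauge n ξ := by
  unfold hgauge; positivity

theorem hgauge_pos {ξ : Fin (2*n+1) → ℝ} (hξ : ξ ≠ 0) : 0 < hgauge n ξ := by
  refine (hgauge_nonneg ξ).lt_of_ne' fun h => hξ ?_
  have hs : hsq n ξ = 0 := by
    unfold hgauge at h; nlinarith [sq_nonneg (hsq n ξ), sq_nonneg (vcoord n ξ)]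
  have ht : vcoord n ξ = 0 := by
    unfold hgauge at h; nlinarith [sq_nonneg (hsq n ξ), sq_nonneg (vcoord n ξ)]
  rw [hsq_eq_sum, Finset.sum_eq_zero_iff_of_nonneg fun _ _ => sq_nonneg _] at hs
  funext k
  by_cases hk : (k : ℕ) < 2 * n
  · exact pow_eq_zero_iff two_ne_zero |>.1 (hs ⟨k, hk⟩ (Finset.mem_univ _))
  · have : k = ⟨2 * n, by omega⟩ := Fin.ext (by simp only; omega)
    rw [this]; exact ht

theorem rho_rpow (ξ : Fin (2*n+1) → ℝ) (r : ℝ) : rho n ξ ^ r = hgauge n ξ ^ (r / 4) := by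
  change (hgauge n ξ ^ (1/4 : ℝ)) ^ r = _
  rw [← Real.rpow_mul (hgauge_nonneg ξ)]
  congr 1
  ring

variable {f g : (Fin (2*n+1) → ℝ) → ℝ} {ξ : Fin (2*n+1) → ℝ}

theorem X_mul (i : Fin (2*n)) (hf : DifferentiableAt ℝ f ξ) (hg : DifferentiableAt ℝ g ξ) :
    X n i (fun η => f η * g η) ξ = f ξ * X n i g ξ + g ξ * X n i f ξ := by
  simp [X, fderiv_fun_mul hf hg]

theorem X_add (i : Fin (2*n)) (hf : DifferentiableAt ℝ f ξ) (hg : DifferentiableAt ℝ g ξ) :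
    X n i (fun η => f η + g η) ξ = X n i f ξ + X n i g ξ := by
  simp [X, fderiv_fun_add hf hg]

theorem X_const_mul (i : Fin (2*n)) (c : ℝ) (hf : DifferentiableAt ℝ f ξ) :
    X n i (fun η => c * f η) ξ = c * X n i f ξ := by
  simp [X, fderiv_const_mul hf]

theorem X_sq (i : Fin (2*n)) (hf : DifferentiableAt ℝ f ξ) :
    X n i (fun η => f η ^ 2) ξ = 2 * f ξ * X n i f ξ := by
  simp_rw [pow_two]
  rw [X_mul i hf hf]
  ring

theorem X_rpow (i : Fin (2*n)) (p : ℝ) (hf : DifferentiableAt ℝ f ξ) (h : f ξ ≠ 0) :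
    X n i (fun η => f η ^ p) ξ = p * f ξ ^ (p - 1) * X n i f ξ := by
  simp [X, (hf.hasFDerivAt.rpow_const (p := p) (Or.inl h)).fderiv]

theorem X_congr (i : Fin (2*n)) (h : f =ᶠ[nhds ξ] g) : X n i f ξ = X n i g ξ := by
  simp [X, h.fderiv_eq]

theorem X_apply (i : Fin (2*n)) (k : Fin (2*n+1)) (ξ : Fin (2*n+1) → ℝ) :
    X n i (fun η => η k) ξ = Xvec n ξ i k := by
  simp [X, (hasFDerivAt_apply k ξ).fderiv]

theorem differentiable_hcoord (i : Fin (2*n)) : Differentiable ℝ (hcoord n i) := by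
  unfold hcoord; fun_prop

theorem differentiable_vcoord : Differentiable ℝ (vcoord n) := by
  unfold vcoord; fun_prop

theorem differentiable_hrot (i : Fin (2*n)) : Differentiable ℝ (hrot n i) := by
  unfold hrot; split_ifs <;> fun_prop

theorem differentiable_hsq : Differentiable ℝ (hsq n) := by
  unfold hsq; fun_prop

theorem differentiable_hgauge : Differentiable ℝ (hgauge n) :=
  (differentiable_hsq.pow 2).add (differentiable_vcoord.pow 2)

theorem X_hcoord (i j : Fin (2*n)) (ξ : Fin (2*n+1) → ℝ) :
    X n i (hcoord n j) ξ = if i = j then 1 else 0 := by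
  have h : (j : ℕ) ≠ 2 * n := by omega
  refine (X_apply i _ ξ).trans ?_
  simp [Xvec, h, Fin.ext_iff, eq_comm]

theorem X_vcoord (i : Fin (2*n)) (ξ : Fin (2*n+1) → ℝ) :
    X n i (vcoord n) ξ = 2 * hrot n i ξ := by
  have h : 2 * n ≠ (i : ℕ) := by omega
  refine (X_apply i _ ξ).trans ?_
  by_cases h' : (i : ℕ) < n <;> simp [Xvec, hrot, h, h']

theorem X_hrot (i j : Fin (2*n)) (ξ : Fin (2*n+1) → ℝ) :
    X n i (hrot n j) ξ =
      if (j : ℕ) + n = i then 1 else if (i : ℕ) + n = j then -1 else 0 := by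
  by_cases h : (j : ℕ) < n
  · have hX : hrot n j = fun η => η ⟨j + n, by omega⟩ := by
      funext η; simp [hrot, h]
    rw [hX, X_apply]
    have h₁ : (j : ℕ) + n ≠ 2 * n := by omega
    have h₂ : (i : ℕ) + n ≠ j := by omega
    simp [Xvec, h₁, h₂]
  · have hX : hrot n j = fun η => (-1) * η ⟨j - n, by omega⟩ := by
      funext η; simp [hrot, h]
    rw [hX, X_const_mul i _ (by fun_prop), X_apply]
    have h₁ : (j : ℕ) - n ≠ 2 * n := by omega
    have h₂ : (j : ℕ) + n ≠ i := by omega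
    have h₃ : (j : ℕ) - n = i ↔ (i : ℕ) + n = j := by omega
    simp [Xvec, h₁, h₂, h₃]

theorem X_hrot_antisymm (i j : Fin (2*n)) (ξ : Fin (2*n+1) → ℝ) :
    X n i (hrot n j) ξ + X n j (hrot n i) ξ = 0 := by
  rw [X_hrot, X_hrot]
  split_ifs <;> first | omega | norm_num

theorem X_hsq (i : Fin (2*n)) (ξ : Fin (2*n+1) → ℝ) :
    X n i (hsq n) ξ = 2 * hcoord n i ξ := by
  have h : HasFDerivAt (hsq n)
      (∑ j, (2 * hcoord n j ξ) • fderiv ℝ (hcoord n j) ξ) ξ := by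
    have := HasFDerivAt.fun_sum (u := Finset.univ) fun (j : Fin (2*n)) _ =>
      (differentiable_hcoord j ξ).hasFDerivAt.pow 2
    simp only [Nat.add_one_sub_one, pow_one, nsmul_eq_mul, Nat.cast_ofNat] at this
    exact this
  have hX (j : Fin (2*n)) : fderiv ℝ (hcoord n j) ξ (Xvec n ξ i) = if i = j then 1 else 0 :=
    X_hcoord i j ξ
  simp [X, h.fderiv, hX]

/-- A quarter of the `i`-th horizontal derivative of `hgauge`. -/
def gaugeDir (n : ℕ) (i : Fin (2*n)) (ξ : Fin (2*n+1) → ℝ) : ℝ :=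
  hsq n ξ * hcoord n i ξ + vcoord n ξ * hrot n i ξ

theorem differentiable_gaugeDir (i : Fin (2*n)) : Differentiable ℝ (gaugeDir n i) :=
  (differentiable_hsq.mul (differentiable_hcoord i)).add
    (differentiable_vcoord.mul (differentiable_hrot i))

theorem X_hgauge (i : Fin (2*n)) (ξ : Fin (2*n+1) → ℝ) :
    X n i (hgauge n) ξ = 4 * gaugeDir n i ξ := by
  have hs := differentiable_hsq (n := n) ξ
  have ht := differentiable_vcoord (n := n) ξ
  unfold hgauge
  rw [X_add i (hs.fun_pow 2) (ht.fun_pow 2), X_sq i hs, X_sq i ht, X_hsq, X_vcoord, gaugeDir]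
  ring

theorem X_gaugeDir (i j : Fin (2*n)) (ξ : Fin (2*n+1) → ℝ) :
    X n i (gaugeDir n j) ξ =
      2 * hcoord n i ξ * hcoord n j ξ + 2 * hrot n i ξ * hrot n j ξ
        + hsq n ξ * (if i = j then 1 else 0) + vcoord n ξ * X n i (hrot n j) ξ := by
  have hs := differentiable_hsq (n := n) ξ
  have ht := differentiable_vcoord (n := n) ξ
  have hx := differentiable_hcoord j ξ
  have hy := differentiable_hrot j ξ
  unfold gaugeDir
  rw [X_add i (hs.fun_mul hx) (ht.fun_mul hy), X_mul i hs hx, X_mul i ht hy, X_hsq, X_vcoord,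
    X_hcoord]
  ring

theorem X_hgauge_rpow (c d p : ℝ) (j : Fin (2*n)) (hξ : ξ ≠ 0) :
    X n j (fun η => c * hgauge n η ^ p + d) ξ =
      4 * c * p * (hgauge n ξ ^ (p - 1) * gaugeDir n j ξ) := by
  have hN := (hgauge_pos hξ).ne'
  have hd := differentiable_hgauge (n := n) ξ
  have hp : DifferentiableAt ℝ (fun η => hgauge n η ^ p) ξ := hd.rpow_const (Or.inl hN)
  have h : X n j (fun _ => d) ξ = 0 := by simp [X]
  rw [X_add j (hp.const_mul c) (differentiableAt_const d), h, X_const_mul j c hp,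
    X_rpow j p hd hN, X_hgauge]
  ring

theorem X_X_hgauge_rpow (c d p : ℝ) (i j : Fin (2*n)) (hξ : ξ ≠ 0) :
    X n i (fun η => X n j (fun ζ => c * hgauge n ζ ^ p + d) η) ξ =
      4 * c * p * hgauge n ξ ^ (p - 1) * (X n i (gaugeDir n j) ξ
        + 4 * (p - 1) / hgauge n ξ * gaugeDir n i ξ * gaugeDir n j ξ) := by
  have hN := hgauge_pos hξ
  have hd := differentiable_hgauge (n := n) ξ
  have hv := differentiable_gaugeDir j ξ
  have hp : DifferentiableAt ℝ (fun η => hgauge n η ^ (p - 1)) ξ :=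
    hd.rpow_const (Or.inl hN.ne')
  have he : (fun η => X n j (fun ζ => c * hgauge n ζ ^ p + d) η) =ᶠ[nhds ξ]
      fun η => 4 * c * p * (hgauge n η ^ (p - 1) * gaugeDir n j η) := by
    filter_upwards [isOpen_ne.mem_nhds hξ] with η hη using X_hgauge_rpow c d p j hη
  rw [X_congr i he, X_const_mul i _ (hp.fun_mul hv), X_mul i hp hv, X_rpow i _ hd hN.ne',
    X_hgauge, Real.rpow_sub_one hN.ne' (p - 1)]
  ring

theorem HessH_hgauge_rpow (c d p : ℝ) (i j : Fin (2*n)) (hξ : ξ ≠ 0) :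
    HessH n (fun η => c * hgauge n η ^ p + d) ξ i j =
      4 * c * p * hgauge n ξ ^ (p - 1) *
        (2 * hcoord n i ξ * hcoord n j ξ + 2 * hrot n i ξ * hrot n j ξ
          + hsq n ξ * (if i = j then 1 else 0)
          + 4 * (p - 1) / hgauge n ξ * gaugeDir n i ξ * gaugeDir n j ξ) := by
  have h : X n j (hrot n i) ξ = -X n i (hrot n j) ξ := by
    linarith [X_hrot_antisymm i j ξ]
  rw [HessH, Matrix.of_apply, X_X_hgauge_rpow c d p i j hξ, X_X_hgauge_rpow c d p j i hξ,
    X_gaugeDir, X_gaugeDir, h]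
  simp only [eq_comm (a := j)]
  ring

theorem sum_hcoord_mul_gaugeDir (ξ : Fin (2*n+1) → ℝ) :
    ∑ i, hcoord n i ξ * gaugeDir n i ξ = hsq n ξ * hsq n ξ := by
  calc _ = hsq n ξ * ∑ i, hcoord n i ξ ^ 2
        + vcoord n ξ * ∑ i, hcoord n i ξ * hrot n i ξ := by
        rw [Finset.mul_sum, Finset.mul_sum, ← Finset.sum_add_distrib]
        exact Finset.sum_congr rfl fun i _ => by rw [gaugeDir]; ring
    _ = _ := by rw [sum_hcoord_mul_hrot, ← hsq_eq_sum]; ring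

theorem sum_hrot_mul_gaugeDir (ξ : Fin (2*n+1) → ℝ) :
    ∑ i, hrot n i ξ * gaugeDir n i ξ = vcoord n ξ * hsq n ξ := by
  calc _ = hsq n ξ * ∑ i, hcoord n i ξ * hrot n i ξ
        + vcoord n ξ * ∑ i, hrot n i ξ ^ 2 := by
        rw [Finset.mul_sum, Finset.mul_sum, ← Finset.sum_add_distrib]
        exact Finset.sum_congr rfl fun i _ => by rw [gaugeDir]; ring
    _ = _ := by rw [sum_hcoord_mul_hrot, sum_hrot_sq]; ring

theorem sum_gaugeDir_sq (ξ : Fin (2*n+1) → ℝ) :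
    ∑ i, gaugeDir n i ξ ^ 2 = hsq n ξ * hgauge n ξ := by
  calc _ = hsq n ξ * ∑ i, hcoord n i ξ * gaugeDir n i ξ
        + vcoord n ξ * ∑ i, hrot n i ξ * gaugeDir n i ξ := by
        rw [Finset.mul_sum, Finset.mul_sum, ← Finset.sum_add_distrib]
        exact Finset.sum_congr rfl fun i _ => by
          rw [pow_two]; nth_rw 1 [gaugeDir]; ring
    _ = _ := by rw [sum_hcoord_mul_gaugeDir, sum_hrot_mul_gaugeDir, hgauge]; ring

end HeisenbergCalculus

section Spectral

open Matrix

/-- If `v` is an eigenvector with eigenvalue `a ≥ 0` and the quadratic form of `M` is nonpositive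
on the orthogonal complement of `v`, then `a` is the sum of the positive eigenvalues. -/
theorem sum_max_eigenvalues_eq {ι : Type*} [Fintype ι] [DecidableEq ι] {M : Matrix ι ι ℝ}
    (hM : M.IsHermitian) {v : ι → ℝ} {a : ℝ} (hv : 0 < v ⬝ᵥ v) (ha : 0 ≤ a)
    (hMv : M *ᵥ v = a • v) (hneg : ∀ u, u ⬝ᵥ v = 0 → u ⬝ᵥ M *ᵥ u ≤ 0) :
    ∑ i, max (hM.eigenvalues i) 0 = a := by
  have hterm (i : ι) : max (hM.eigenvalues i) 0 =
      a / (v ⬝ᵥ v) * ((hM.eigenvectorBasis i).ofLp ⬝ᵥ v) ^ 2 := by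
    set u := (hM.eigenvectorBasis i).ofLp with hu
    set e := hM.eigenvalues i
    set r := u ⬝ᵥ v with hr
    have hMu : M *ᵥ u = e • u := hM.mulVec_eigenvectorBasis i
    have huu : u ⬝ᵥ u = 1 := by
      have h := hM.eigenvectorBasis.orthonormal.1 i
      have h' := real_inner_self_eq_norm_sq (hM.eigenvectorBasis i)
      rw [h, EuclideanSpace.inner_eq_star_dotProduct] at h'
      simpa using h'
    have hsymm : e * r = a * r := by
      have h : (M *ᵥ u) ⬝ᵥ v = u ⬝ᵥ M *ᵥ v := by
        have hT : Mᵀ = M := by simpa [Matrix.IsHermitian] using hM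
        rw [dotProduct_mulVec, ← mulVec_transpose, hT]
      simpa [hMu, hMv] using h
    rcases eq_or_ne r 0 with h0 | h0
    · have := hneg u h0
      rw [hMu, dotProduct_smul, huu, smul_eq_mul, mul_one] at this
      simp [h0, this]
    · have hea : e = a := mul_right_cancel₀ h0 hsymm
      rw [hea, max_eq_left ha]
      rcases ha.eq_or_lt with h | h
      · simp [← h]
      · set w := u - (r / (v ⬝ᵥ v)) • v with hw
        have hMw : M *ᵥ w = a • w := by
          rw [hw, mulVec_sub, mulVec_smul, hMu, hMv, hea, smul_sub, smul_comm]
        have hwv : w ⬝ᵥ v = 0 := by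
          rw [hw, sub_dotProduct, smul_dotProduct, smul_eq_mul, div_mul_cancel₀ _ hv.ne', hr,
            sub_self]
        have hww := hneg w hwv
        rw [hMw, dotProduct_smul, smul_eq_mul] at hww
        have hww' : w ⬝ᵥ w = 1 - r ^ 2 / (v ⬝ᵥ v) := by
          nth_rw 2 [hw]
          rw [dotProduct_sub, dotProduct_smul, hwv, smul_zero, sub_zero, hw, sub_dotProduct,
            smul_dotProduct, huu, dotProduct_comm v u, smul_eq_mul, ← hr]
          ring
        have hnn : 0 ≤ w ⬝ᵥ w := Finset.sum_nonneg fun _ _ => mul_self_nonneg _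
        have hz : w ⬝ᵥ w = 0 := by nlinarith
        rw [hww'] at hz
        rw [div_mul_eq_mul_div, mul_div_assoc]
        rw [show r ^ 2 / (v ⬝ᵥ v) = 1 by linarith, mul_one]
  have hpars : ∑ i, ((hM.eigenvectorBasis i).ofLp ⬝ᵥ v) ^ 2 = v ⬝ᵥ v := by
    have h := hM.eigenvectorBasis.sum_sq_norm_inner_right (WithLp.toLp 2 v)
    rw [← real_inner_self_eq_norm_sq] at h
    simp only [EuclideanSpace.inner_eq_star_dotProduct, star_trivial, Real.norm_eq_abs,
      sq_abs] at h
    simpa only [dotProduct_comm v] using h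
  simp_rw [hterm, ← Finset.mul_sum, hpars]
  exact div_mul_cancel₀ a hv.ne'

theorem pucciPlus_eq_trace (la La : ℝ) {k : ℕ} {M : Matrix (Fin k) (Fin k) ℝ}
    (hM : M.IsHermitian) :
    pucciPlus la La hM = -La * M.trace + (La - la) * ∑ i, max (hM.eigenvalues i) 0 := by
  rw [hM.trace_eq_sum_eigenvalues, pucciPlus, Finset.mul_sum, Finset.mul_sum,
    ← Finset.sum_add_distrib]
  refine Finset.sum_congr rfl fun i _ => ?_
  have h := min_add_max (hM.eigenvalues i) 0
  simp only [RCLike.ofReal_real_eq_id, id_eq]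
  linear_combination (-La) * h

end Spectral

section GaugePower

open Matrix

variable {n : ℕ} {ξ : Fin (2*n+1) → ℝ}

theorem trace_HessH_hgauge_rpow (c d p : ℝ) (hξ : ξ ≠ 0) :
    (HessH n (fun η => c * hgauge n η ^ p + d) ξ).trace =
      4 * c * p * hgauge n ξ ^ (p - 1) * hsq n ξ * (2 * n + 4 * p) := by
  have hN := (hgauge_pos hξ).ne'
  have h (i : Fin (2*n)) : HessH n (fun η => c * hgauge n η ^ p + d) ξ i i =
      4 * c * p * hgauge n ξ ^ (p - 1) * (2 * hcoord n i ξ ^ 2 + 2 * hrot n i ξ ^ 2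
        + hsq n ξ + 4 * (p - 1) / hgauge n ξ * gaugeDir n i ξ ^ 2) := by
    rw [HessH_hgauge_rpow c d p i i hξ, if_pos rfl]
    ring
  simp_rw [Matrix.trace, Matrix.diag_apply, h]
  rw [← Finset.mul_sum]
  simp_rw [Finset.sum_add_distrib, ← Finset.mul_sum]
  rw [← hsq_eq_sum, sum_hrot_sq, sum_gaugeDir_sq]
  simp only [Finset.sum_const, Finset.card_univ, Fintype.card_fin, nsmul_eq_mul]
  push_cast
  field_simp
  ring

theorem HessH_hgauge_rpow_mulVec (c d p : ℝ) (hξ : ξ ≠ 0) (u : Fin (2*n) → ℝ) (i : Fin (2*n)) :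
    (HessH n (fun η => c * hgauge n η ^ p + d) ξ *ᵥ u) i =
      4 * c * p * hgauge n ξ ^ (p - 1) *
        (2 * hcoord n i ξ * ∑ j, hcoord n j ξ * u j + 2 * hrot n i ξ * ∑ j, hrot n j ξ * u j
          + hsq n ξ * u i
          + 4 * (p - 1) / hgauge n ξ * gaugeDir n i ξ * ∑ j, gaugeDir n j ξ * u j) := by
  have hδ : u i = ∑ j, (if i = j then 1 else 0) * u j := by simp
  rw [hδ]
  simp_rw [Matrix.mulVec, dotProduct, HessH_hgauge_rpow c d p i _ hξ, Finset.mul_sum,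
    ← Finset.sum_add_distrib, Finset.mul_sum]
  exact Finset.sum_congr rfl fun j _ => by ring

theorem sum_max_eigenvalues_HessH_hgauge_rpow (c d p : ℝ) (hc : 0 ≤ c) (hp : p ≤ 0) (hξ : ξ ≠ 0)
    (hM : (HessH n (fun η => c * hgauge n η ^ p + d) ξ).IsHermitian) :
    ∑ i, max (hM.eigenvalues i) 0 =
      4 * c * p * hgauge n ξ ^ (p - 1) * hsq n ξ * (4 * p - 1) := by
  have hN := hgauge_pos hξ
  have hs := hsq_nonneg ξ
  have hK : 4 * c * p * hgauge n ξ ^ (p - 1) ≤ 0 :=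
    mul_nonpos_of_nonpos_of_nonneg (by nlinarith) (by positivity)
  rcases hs.eq_or_lt with h0 | hpos
  · have hx (i : Fin (2*n)) : hcoord n i ξ = 0 := by
      have h := h0.symm
      rw [hsq_eq_sum, Finset.sum_eq_zero_iff_of_nonneg fun _ _ => sq_nonneg _] at h
      simpa using h i (Finset.mem_univ _)
    have hy (i : Fin (2*n)) : hrot n i ξ = 0 := by
      have h := hrot_sq i ξ
      rw [hx] at h
      simpa using h
    have hzero : HessH n (fun η => c * hgauge n η ^ p + d) ξ = 0 := by
      ext i j
      rw [HessH_hgauge_rpow c d p i j hξ, gaugeDir, hx, hy, ← h0]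
      simp
    have he : hM.eigenvalues = 0 := hM.eigenvalues_eq_zero_iff.2 hzero
    simp [he, ← h0]
  · refine sum_max_eigenvalues_eq hM (v := fun i => gaugeDir n i ξ) ?_ ?_ ?_ ?_
    · have h : (fun i => gaugeDir n i ξ) ⬝ᵥ (fun i => gaugeDir n i ξ) = hsq n ξ * hgauge n ξ := by
        rw [← sum_gaugeDir_sq]
        exact Finset.sum_congr rfl fun i _ => (pow_two _).symm
      rw [h]
      positivity
    · exact mul_nonneg_of_nonpos_of_nonpos (mul_nonpos_of_nonpos_of_nonneg hK hs) (by linarith)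
    · funext i
      rw [HessH_hgauge_rpow_mulVec c d p hξ, sum_hcoord_mul_gaugeDir, sum_hrot_mul_gaugeDir]
      simp_rw [← pow_two, sum_gaugeDir_sq]
      simp only [Pi.smul_apply, smul_eq_mul]
      have hdir := gaugeDir.eq_1 n i ξ
      have hN' := hN.ne'
      field_simp
      linear_combination (-2 * c * p) * hdir
    · intro u hu
      have hu' : ∑ j, gaugeDir n j ξ * u j = 0 := by
        rw [← hu, dotProduct]
        exact Finset.sum_congr rfl fun i _ => mul_comm _ _
      obtain ⟨A, hA⟩ : ∃ A, ∑ j, hcoord n j ξ * u j = A := ⟨_, rfl⟩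
      obtain ⟨B, hB⟩ : ∃ B, ∑ j, hrot n j ξ * u j = B := ⟨_, rfl⟩
      have h : u ⬝ᵥ HessH n (fun η => c * hgauge n η ^ p + d) ξ *ᵥ u =
          4 * c * p * hgauge n ξ ^ (p - 1) *
            (2 * A * A + 2 * B * B + hsq n ξ * ∑ i, u i ^ 2) := by
        calc _ = 4 * c * p * hgauge n ξ ^ (p - 1) *
              (2 * A * ∑ j, hcoord n j ξ * u j + 2 * B * ∑ j, hrot n j ξ * u j
                + hsq n ξ * ∑ i, u i ^ 2) := by
              simp_rw [Finset.mul_sum, ← Finset.sum_add_distrib, Finset.mul_sum]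
              refine Finset.sum_congr rfl fun i _ => ?_
              rw [HessH_hgauge_rpow_mulVec c d p hξ, hu', hA, hB]
              ring
          _ = _ := by rw [hA, hB]
      rw [h]
      refine mul_nonpos_of_nonpos_of_nonneg hK ?_
      have hsum : 0 ≤ ∑ i, u i ^ 2 := Finset.sum_nonneg fun _ _ => sq_nonneg _
      nlinarith [mul_self_nonneg A, mul_self_nonneg B, mul_nonneg hs hsum]

end GaugePower

theorem convexOn_rpow_of_nonpos {r : ℝ} (hr : r ≤ 0) :
    ConvexOn ℝ (Set.Ioi 0) fun x : ℝ => x ^ r := by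
  refine ⟨convex_Ioi 0, fun x hx y hy a b ha hb hab => ?_⟩
  have hx' : 0 < x := hx
  have hy' : 0 < y := hy
  have hxy : 0 < a • x + b • y := convex_Ioi 0 hx hy ha hb hab
  have hlog := strictConcaveOn_log_Ioi.concaveOn.2 hx hy ha hb hab
  have hexp := convexOn_exp.2 (Set.mem_univ (Real.log x * r)) (Set.mem_univ (Real.log y * r))
    ha hb hab
  simp only [Real.rpow_def_of_pos hx', Real.rpow_def_of_pos hy', Real.rpow_def_of_pos hxy]
  refine (Real.exp_le_exp.2 ?_).trans hexp
  simp only [smul_eq_mul] at hlog ⊢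
  nlinarith

/-- with `β = (Λ/λ)(Q-1)+1`, `Q = 2n+2`, the radial function
`Φ₂(ξ) = C₁ ρ(ξ)^{2-β} + C₂` with `C₁ ≥ 0` satisfies `𝓜⁺_{λ,Λ}(D²Φ₂) = 0`
classically in `ℝ^{2n+1} \ {0}`, and `r ↦ C₁ r^{2-β}+C₂` is convex and
decreasing on `(0,∞)`. -/
theorem fundamental_solution_pucci_plus_convex (n : ℕ) (hn : 1 ≤ n)
    (la La C₁ C₂ : ℝ) (h0 : 0 < la) (hle : la ≤ La) (hC : 0 ≤ C₁)
    (β : ℝ) (hβ : β = La / la * (2*n + 1) + 1)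
    (φ : ℝ → ℝ) (hφ : φ = fun r => C₁ * r ^ (2 - β) + C₂)
    (hM : ∀ ξ : Fin (2*n+1) → ℝ,
      (HessH n (fun η => φ (rho n η)) ξ).IsHermitian) :
    (∀ ξ : Fin (2*n+1) → ℝ, ξ ≠ 0 → pucciPlus la La (hM ξ) = 0) ∧
    ConvexOn ℝ (Set.Ioi 0) φ ∧ AntitoneOn φ (Set.Ioi 0) := by
  have hβ4 : 2 - β ≤ 0 := by
    have h1 : 1 ≤ La / la := (one_le_div h0).2 hle
    have h2 : (1 : ℝ) ≤ n := by exact_mod_cast hn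
    nlinarith
  subst hφ
  refine ⟨fun ξ hξ => ?_, ?_, ?_⟩
  · have hfun : (fun η => (fun r : ℝ => C₁ * r ^ (2 - β) + C₂) (rho n η)) =
        fun η => C₁ * hgauge n η ^ ((2 - β) / 4) + C₂ := by
      funext η
      simp only [rho_rpow]
    have key : ∀ f, f = (fun η => C₁ * hgauge n η ^ ((2 - β) / 4) + C₂) →
        ∀ h : (HessH n f ξ).IsHermitian, pucciPlus la La h = 0 := by
      rintro _ rfl h
      rw [pucciPlus_eq_trace, trace_HessH_hgauge_rpow _ _ _ hξ,
        sum_max_eigenvalues_HessH_hgauge_rpow _ _ _ hC (by linarith) hξ]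
      have hβ' : la * (β - 1) = La * (2 * n + 1) := by
        rw [hβ]; field_simp; ring
      linear_combination (4 * C₁ * ((2 - β) / 4) * hgauge n ξ ^ ((2 - β) / 4 - 1) * hsq n ξ) * hβ'
    exact key _ hfun (hM ξ)
  · exact ((convexOn_rpow_of_nonpos hβ4).smul hC).add (convexOn_const C₂ (convex_Ioi 0))
  · intro x hx y hy hxy
    have h := Real.antitoneOn_rpow_Ioi_of_exponent_nonpos hβ4 hx hy hxy
    exact add_le_add_left (mul_le_mul_of_nonneg_left h hC) C₂
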